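/- Hopf boundary point lemma: let B ⊂ ℝⁿ be an open ball and x₀ ∈ ∂B, with ν the outer unit normal to B at x₀. (i) If M_a is of class 𝒜_1, u is upper semicontinuous on B̄ and a viscosity subsolution of M_a(D²u) = 0 in B, u(x₀) > u(x) for all x ∈ B, and the outer normal derivative ∂u/∂ν(x₀) = lim_{t→0⁺} (u(x₀) − u(x₀ − tν))/t exists, then ∂u/∂ν(x₀) > 0. (ii) If M_a is of class 𝒜_n, u is lower semicontinuous on B̄ and a viscosity supersolution of M_a(D²u) = 0 in B, u(x₀) < u(x) for all x ∈ B, and the outer normal derivative at x₀ exists, then ∂u/∂ν(x₀) < 0. -/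

import Mathlib

open Set Metric MeasureTheory Filter

noncomputable section

/-- Euclidean `n`-space `ℝⁿ`. -/
abbrev En (n : ℕ) : Type := EuclideanSpace ℝ (Fin n)

/-- The eigenvalues of a (symmetric) matrix, arranged in nondecreasing order. -/
noncomputable def sortedEig {n : ℕ} (X : Matrix (Fin n) (Fin n) ℝ) : Fin n → ℝ :=
  if hX : X.IsHermitian then fun i => hX.eigenvalues (Tuple.sort hX.eigenvalues i) else 0

/-- The weighted partial trace operator `M_a(X) = Σ a_i λ_i(X)`. -/
noncomputable def Ma {n : ℕ} (a : Fin n → ℝ) (X : Matrix (Fin n) (Fin n) ℝ) : ℝ :=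
  ∑ i, a i * sortedEig X i

/-- The last index of `Fin n`. -/
def lastIdx (n : ℕ) [NeZero n] : Fin n :=
  ⟨n - 1, Nat.sub_lt (Nat.pos_of_ne_zero (NeZero.ne n)) Nat.one_pos⟩

/-- The class 𝒜̄ : all weights nonnegative, some weight positive. -/
def ClassAbar {n : ℕ} (a : Fin n → ℝ) : Prop := (∀ i, 0 ≤ a i) ∧ ∃ i, 0 < a i

/-- The class 𝒜 : nonnegative weights with `a 1 > 0` and `a n > 0`. -/
def ClassA {n : ℕ} [NeZero n] (a : Fin n → ℝ) : Prop :=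
  (∀ i, 0 ≤ a i) ∧ 0 < a 0 ∧ 0 < a (lastIdx n)

/-- The class 𝒜₁ : nonnegative weights with `a 1 > 0`. -/
def ClassA1 {n : ℕ} [NeZero n] (a : Fin n → ℝ) : Prop := (∀ i, 0 ≤ a i) ∧ 0 < a 0

/-- The class 𝒜ₙ : nonnegative weights with `a n > 0`. -/
def ClassAn {n : ℕ} [NeZero n] (a : Fin n → ℝ) : Prop :=
  (∀ i, 0 ≤ a i) ∧ 0 < a (lastIdx n)

/-- `a* = min (a 1) (a n)`. -/
noncomputable def aStar {n : ℕ} [NeZero n] (a : Fin n → ℝ) : ℝ := min (a 0) (a (lastIdx n))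

/-- `â_j = (a 1 + ⋯ + a n) - a j`. -/
noncomputable def hatA {n : ℕ} (a : Fin n → ℝ) (j : Fin n) : ℝ := (∑ i, a i) - a j

/-- The Hessian matrix of `φ` at `x`. -/
noncomputable def hess {n : ℕ} (φ : En n → ℝ) (x : En n) : Matrix (Fin n) (Fin n) ℝ :=
  fun i j => iteratedFDeriv ℝ 2 φ x ![EuclideanSpace.single i 1, EuclideanSpace.single j 1]

/-- The Hessian matrix of `φ` at `x`, with derivatives taken within `Ω`. -/
noncomputable def hessOn {n : ℕ} (Ω : Set (En n)) (φ : En n → ℝ) (x : En n) :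
    Matrix (Fin n) (Fin n) ℝ :=
  fun i j =>
    iteratedFDerivWithin ℝ 2 φ Ω x ![EuclideanSpace.single i 1, EuclideanSpace.single j 1]

/-- `u` is a viscosity subsolution of `M_a(D²u) = f` in `Ω`. -/
def IsViscSubsol {n : ℕ} (a : Fin n → ℝ) (Ω : Set (En n)) (f u : En n → ℝ) : Prop :=
  ∀ x₀ ∈ Ω, ∀ φ : En n → ℝ, ContDiff ℝ 2 φ →
    IsLocalMaxOn (fun x => u x - φ x) Ω x₀ → f x₀ ≤ Ma a (hess φ x₀)

/-- `u` is a viscosity supersolution of `M_a(D²u) = f` in `Ω`. -/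
def IsViscSupersol {n : ℕ} (a : Fin n → ℝ) (Ω : Set (En n)) (f u : En n → ℝ) : Prop :=
  ∀ x₀ ∈ Ω, ∀ φ : En n → ℝ, ContDiff ℝ 2 φ →
    IsLocalMinOn (fun x => u x - φ x) Ω x₀ → Ma a (hess φ x₀) ≤ f x₀

/-- `u` is a (continuous) viscosity solution of `M_a(D²u) = f` in `Ω`. -/
def IsViscSolution {n : ℕ} (a : Fin n → ℝ) (Ω : Set (En n)) (f u : En n → ℝ) : Prop :=
  ContinuousOn u Ω ∧ IsViscSubsol a Ω f u ∧ IsViscSupersol a Ω f u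

/-- The `L^p` norm of `f` on `D`. -/
noncomputable def lpNormOn {n : ℕ} (p : ℝ) (D : Set (En n)) (f : En n → ℝ) : ℝ :=
  (∫ x in D, |f x| ^ p) ^ (1 / p)

/-- The sup norm of `f` on `D`. -/
noncomputable def supAbsOn {n : ℕ} (D : Set (En n)) (f : En n → ℝ) : ℝ :=
  sSup ((fun x => |f x|) '' D)

/-- The Hölder seminorm `[h]_{β,D}`. -/
noncomputable def holderSemi {n : ℕ} (β : ℝ) (D : Set (En n)) (h : En n → ℝ) : ℝ :=
  sSup {r | ∃ x ∈ D, ∃ y ∈ D, x ≠ y ∧ r = |h x - h y| / ‖x - y‖ ^ β}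

/-- The Hölder norm `‖g‖_{C^β(D)} = sup_D |g| + [g]_{β,D}`. -/
noncomputable def cBetaNorm {n : ℕ} (β : ℝ) (D : Set (En n)) (g : En n → ℝ) : ℝ :=
  supAbsOn D g + holderSemi β D g

/-- `g` is `β`-Hölder continuous on `D`. -/
def HolderOn {n : ℕ} (β : ℝ) (D : Set (En n)) (g : En n → ℝ) : Prop :=
  ∃ K : ℝ, ∀ x ∈ D, ∀ y ∈ D, |g x - g y| ≤ K * ‖x - y‖ ^ β

/-- The `C^{1,β}(D)` norm: `sup|g| + sup|Dg| + [Dg]_{β,D}`. -/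
noncomputable def c1BetaNorm {n : ℕ} (β : ℝ) (D : Set (En n)) (g : En n → ℝ) : ℝ :=
  supAbsOn D g + sSup ((fun x => ‖fderiv ℝ g x‖) '' D) +
    sSup {r | ∃ x ∈ D, ∃ y ∈ D, x ≠ y ∧ r = ‖fderiv ℝ g x - fderiv ℝ g y‖ / ‖x - y‖ ^ β}

/-- `g ∈ C^{1,β}(D)`: differentiable with `β`-Hölder derivative on `D`. -/
def C1HolderOn {n : ℕ} (β : ℝ) (D : Set (En n)) (g : En n → ℝ) : Prop :=
  ContDiff ℝ 1 g ∧ ∃ K : ℝ, ∀ x ∈ D, ∀ y ∈ D,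
    ‖fderiv ℝ g x - fderiv ℝ g y‖ ≤ K * ‖x - y‖ ^ β

/-- Uniform exterior sphere condition with radius `R`: every boundary point lies on the
boundary of a closed ball of radius `R` containing `Ω̄`. -/
def ExtSphere {n : ℕ} (Ω : Set (En n)) (R : ℝ) : Prop :=
  ∀ y ∈ frontier Ω, ∃ z : En n, dist y z = R ∧ closure Ω ⊆ closedBall z R

/-- The cone `Σ_θ = {x : xₙ ≥ |x| cos θ}`. -/
def coneSet (n : ℕ) [NeZero n] (θ : ℝ) : Set (En n) := {x | ‖x‖ * Real.cos θ ≤ x (lastIdx n)}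

/-- Uniform exterior cone condition. -/
def ExtCone {n : ℕ} [NeZero n] (Ω : Set (En n)) : Prop :=
  ∃ θ₀ ∈ Set.Ioo (0 : ℝ) Real.pi, ∃ r₀ > (0 : ℝ), ∀ y ∈ frontier Ω,
    ∃ O : En n ≃ₗᵢ[ℝ] En n,
      closure Ω ∩ ball y r₀ ⊆ (fun x => y + O x) '' coneSet n θ₀

/-- Uniform Lipschitz boundary with Lipschitz constant `L`: near each boundary point, in
suitable rotated coordinates, `Ω` is the region above the graph of an `L`-Lipschitz
function. -/
def LipschitzBoundary {n : ℕ} [NeZero n] (Ω : Set (En n)) (L : ℝ) : Prop :=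
  ∃ r₀ > (0 : ℝ), ∀ y ∈ frontier Ω, ∃ O : En n ≃ₗᵢ[ℝ] En n, ∃ ψ : En n → ℝ,
    LipschitzWith (Real.toNNReal L) ψ ∧
    ∀ x ∈ ball (0 : En n) r₀,
      (y + O x ∈ Ω ↔ ψ (x - EuclideanSpace.single (lastIdx n) (x (lastIdx n))) < x (lastIdx n))

/-- The open cube of edge `ℓ` centered at the origin. -/
def cube (n : ℕ) (ℓ : ℝ) : Set (En n) := {x | ∀ i, |x i| < ℓ / 2}

/-- The upper concave envelope of `u` in `Ω`: the smallest concave function `≥ u` in `Ω`. -/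
noncomputable def upperEnvelope {n : ℕ} (Ω : Set (En n)) (u : En n → ℝ) : En n → ℝ :=
  fun x => sInf {t | ∃ φ : En n → ℝ, ConcaveOn ℝ Ω φ ∧ (∀ z ∈ Ω, u z ≤ φ z) ∧ t = φ x}

/-- The lower convex envelope of `u` in `Ω`: the largest convex function `≤ u` in `Ω`. -/
noncomputable def lowerEnvelope {n : ℕ} (Ω : Set (En n)) (u : En n → ℝ) : En n → ℝ :=
  fun x => sSup {t | ∃ φ : En n → ℝ, ConvexOn ℝ Ω φ ∧ (∀ z ∈ Ω, φ z ≤ u z) ∧ t = φ x}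

end

/-!
For part (i), compare `u` near `x₀` with the quadratic barrier
`q x = ⟪e, x - x₀⟫ + L ⟪e, x - x₀⟫² - r⁻¹ ‖x - x₀‖²`, where `e = -ν`. The cap of small height on
which `q ≥ 0` meets the sphere only at `x₀`, so `u + ε q ≤ u x₀` on its boundary for small `ε`. At
an interior maximum of `u + ε q` the function `-ε q` would be a test function for `u`, but its
Hessian has the eigenvalue `-2 ε (L - r⁻¹)` in the direction `e` and `2 ε r⁻¹` in the orthogonal
ones; since the smallest eigenvalue carries the positive weight `a₁`, a large `L` makes `M_a`
negative there. Hence `u + ε q ≤ u x₀` on the whole cap, and along the inner normal `q` grows at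
least linearly. Part (ii) is part (i) for `-u` and the reversed weights, as
`M_a(-X) = -M_{rev a}(X)`.
-/

open Matrix Topology
open scoped InnerProductSpace

section MaximumPrinciple

variable {X β : Type*} [TopologicalSpace X] [LinearOrder β] {K : Set X} {w : X → β} {M : β}

lemma exists_lt_forall_mem_le_of_isCompact [NoMinOrder β] (hK : IsCompact K)
    (hw : UpperSemicontinuousOn w K) (hlt : ∀ x ∈ K, w x < M) :
    ∃ m < M, ∀ x ∈ K, w x ≤ m := by
  rcases K.eq_empty_or_nonempty with rfl | hne
  · simpa using exists_lt M
  · obtain ⟨p, hp, hmax⟩ := hw.exists_isMaxOn hne hK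
    exact ⟨w p, hlt p hp, hmax⟩

lemma forall_mem_le_of_not_isLocalMax (hK : IsCompact K) (hw : UpperSemicontinuousOn w K)
    (h : ∀ x ∈ K, M < w x → x ∈ interior K ∧ ¬ IsLocalMax w x) :
    ∀ x ∈ K, w x ≤ M := by
  intro x hx
  obtain ⟨p, hp, hmax⟩ := hw.exists_isMaxOn ⟨x, hx⟩ hK
  refine (hmax hx).trans (le_of_not_gt fun hMp => ?_)
  obtain ⟨hpK, hnot⟩ := h p hp hMp
  exact hnot (hmax.isLocalMax (mem_interior_iff_mem_nhds.mp hpK))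

end MaximumPrinciple

section Barrier

variable {E : Type*} [NormedAddCommGroup E] [InnerProductSpace ℝ E] {e x₀ x : E} {r L : ℝ}

/-- The quadratic barrier at the boundary point `x₀` of a ball of radius `r` with inner unit normal
`e`: it vanishes at `x₀` with unit slope in the direction `e`, and its Hessian
`2 (L e ⊗ e - r⁻¹ I)` has the arbitrarily large eigenvalue `2 (L - r⁻¹)`. -/
noncomputable def hopfBarrier (e x₀ : E) (r L : ℝ) (x : E) : ℝ :=
  ⟪e, x - x₀⟫_ℝ + L * ⟪e, x - x₀⟫_ℝ ^ 2 - r⁻¹ * ‖x - x₀‖ ^ 2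

/-- The compact cap at `x₀` on which a subsolution is compared with `hopfBarrier e x₀ r L`. Its
height `(2 * L)⁻¹` is small enough for it to touch the sphere only at `x₀`. -/
def hopfCap (e x₀ : E) (r L : ℝ) : Set E :=
  {x | 0 ≤ ⟪e, x - x₀⟫_ℝ ∧ ⟪e, x - x₀⟫_ℝ ≤ (2 * L)⁻¹ ∧ 0 ≤ hopfBarrier e x₀ r L x}

lemma hopfBarrier_self : hopfBarrier e x₀ r L x₀ = 0 := by
  simp [hopfBarrier]

lemma contDiff_hopfBarrier {k : WithTop ℕ∞} : ContDiff ℝ k (hopfBarrier e x₀ r L) := by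
  have hsub : ContDiff ℝ k fun x : E => x - x₀ := contDiff_id.sub contDiff_const
  have hinner : ContDiff ℝ k fun x => ⟪e, x - x₀⟫_ℝ := contDiff_const.inner ℝ hsub
  exact (hinner.add (contDiff_const.mul (hinner.pow 2))).sub
    (contDiff_const.mul (hsub.norm_sq ℝ))

lemma continuous_hopfBarrier : Continuous (hopfBarrier e x₀ r L) :=
  (contDiff_hopfBarrier (k := 0)).continuous

lemma hasFDerivAt_inner_sub (e x₀ x : E) :
    HasFDerivAt (fun y => ⟪e, y - x₀⟫_ℝ) (innerSL ℝ e) x :=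
  (innerSL ℝ e).hasFDerivAt.comp x ((hasFDerivAt_id x).sub_const x₀)

lemma hasFDerivAt_hopfBarrier (x : E) :
    HasFDerivAt (hopfBarrier e x₀ r L)
      ((1 + 2 * L * ⟪e, x - x₀⟫_ℝ) • innerSL ℝ e - (2 * r⁻¹) • innerSL ℝ (x - x₀)) x := by
  have hinner := hasFDerivAt_inner_sub e x₀ x
  have hnorm := ((hasFDerivAt_id x).sub_const x₀).norm_sq
  refine ((hinner.add ((hinner.pow 2).const_mul L)).sub (hnorm.const_mul r⁻¹)).congr_fderiv ?_
  ext v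
  simp
  ring

lemma fderiv_fderiv_hopfBarrier_apply (x v w : E) :
    fderiv ℝ (fderiv ℝ (hopfBarrier e x₀ r L)) x v w =
      2 * (L * (⟪e, v⟫_ℝ * ⟪e, w⟫_ℝ) - r⁻¹ * ⟪v, w⟫_ℝ) := by
  have hradial : HasFDerivAt (fun y => innerSL ℝ (y - x₀)) (innerSL ℝ) x :=
    (innerSL ℝ).hasFDerivAt.comp x ((hasFDerivAt_id x).sub_const x₀)
  have hfderiv : fderiv ℝ (hopfBarrier e x₀ r L) =
      (fun y => (1 + 2 * L * ⟪e, y - x₀⟫_ℝ) • innerSL ℝ e) -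
        (2 * r⁻¹) • fun y => innerSL ℝ (y - x₀) :=
    funext fun y => (hasFDerivAt_hopfBarrier y).fderiv
  have happly : (innerSL ℝ : E →L[ℝ] E →L[ℝ] ℝ) v w = ⟪v, w⟫_ℝ := rfl
  rw [hfderiv, (((((hasFDerivAt_inner_sub e x₀ x).const_mul (2 * L)).const_add 1).smul_const
    (innerSL ℝ e)).sub (hradial.const_smul (2 * r⁻¹))).fderiv]
  simp [happly]
  ring

lemma mem_ball_add_smul_iff (hr : 0 < r) (he : ‖e‖ = 1) :
    x ∈ ball (x₀ + r • e) r ↔ ‖x - x₀‖ ^ 2 < 2 * r * ⟪e, x - x₀⟫_ℝ := by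
  have hexpand : ‖x - (x₀ + r • e)‖ ^ 2 =
      ‖x - x₀‖ ^ 2 - 2 * r * ⟪e, x - x₀⟫_ℝ + r ^ 2 := by
    rw [← sub_sub, norm_sub_sq_real, real_inner_smul_right, real_inner_comm, norm_smul, he,
      mul_one, Real.norm_eq_abs, sq_abs]
    ring
  rw [mem_ball_iff_norm, ← sq_lt_sq₀ (norm_nonneg _) hr.le, hexpand]
  constructor <;> intro h <;> linarith

lemma hopfCap_subset (hr : 0 < r) (hL : 0 < L) (he : ‖e‖ = 1) :
    hopfCap e x₀ r L ⊆ insert x₀ (ball (x₀ + r • e) r) := by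
  rintro x ⟨hs, hsL, hq⟩
  refine or_iff_not_imp_left.mpr fun hne => (mem_ball_add_smul_iff hr he).mpr ?_
  have hnorm : ‖x - x₀‖ ^ 2 ≤ r * (⟪e, x - x₀⟫_ℝ + L * ⟪e, x - x₀⟫_ℝ ^ 2) :=
    (inv_mul_le_iff₀ hr).mp (sub_nonneg.mp hq)
  have hpos : 0 < ‖x - x₀‖ ^ 2 := by
    have := norm_pos_iff.mpr (sub_ne_zero.mpr hne)
    positivity
  have hsmall : L * ⟪e, x - x₀⟫_ℝ ≤ 1 / 2 := by
    calc L * ⟪e, x - x₀⟫_ℝ ≤ L * (2 * L)⁻¹ := by gcongr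
      _ = 1 / 2 := by field_simp
  have hs_pos : 0 < ⟪e, x - x₀⟫_ℝ := by
    refine hs.lt_of_ne fun h => ?_
    rw [← h] at hnorm
    linarith
  calc ‖x - x₀‖ ^ 2 ≤ r * (1 + L * ⟪e, x - x₀⟫_ℝ) * ⟪e, x - x₀⟫_ℝ := by linarith
    _ ≤ r * (1 + 1 / 2) * ⟪e, x - x₀⟫_ℝ := by gcongr
    _ < 2 * r * ⟪e, x - x₀⟫_ℝ := by linarith [mul_pos hr hs_pos]

lemma isClosed_hopfCap : IsClosed (hopfCap e x₀ r L) := by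
  have hinner : Continuous fun x => ⟪e, x - x₀⟫_ℝ := by fun_prop
  exact (isClosed_le continuous_const hinner).inter
    ((isClosed_le hinner continuous_const).inter
      (isClosed_le continuous_const continuous_hopfBarrier))

lemma isCompact_hopfCap [ProperSpace E] (hr : 0 < r) (hL : 0 < L) (he : ‖e‖ = 1) :
    IsCompact (hopfCap e x₀ r L) :=
  isCompact_of_isClosed_isBounded isClosed_hopfCap
    ((isBounded_ball.insert x₀).subset (hopfCap_subset hr hL he))

lemma mem_interior_hopfCap (hs : 0 < ⟪e, x - x₀⟫_ℝ) (hsL : ⟪e, x - x₀⟫_ℝ < (2 * L)⁻¹)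
    (hq : 0 < hopfBarrier e x₀ r L x) : x ∈ interior (hopfCap e x₀ r L) := by
  have hinner : Continuous fun x => ⟪e, x - x₀⟫_ℝ := by fun_prop
  rw [mem_interior_iff_mem_nhds]
  filter_upwards [hinner.continuousAt.eventually_const_lt hs,
    hinner.continuousAt.eventually_lt_const hsL,
    continuous_hopfBarrier.continuousAt.eventually_const_lt hq] with y hys hysL hyq
  exact ⟨hys.le, hysL.le, hyq.le⟩

lemma hopfBarrier_le_inv (hr : 0 < r) (hL : 0 < L) (hx : x ∈ hopfCap e x₀ r L) :
    hopfBarrier e x₀ r L x ≤ L⁻¹ := by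
  obtain ⟨hs, hsL, -⟩ := hx
  calc hopfBarrier e x₀ r L x ≤ ⟪e, x - x₀⟫_ℝ + L * ⟪e, x - x₀⟫_ℝ ^ 2 :=
        sub_le_self _ (by positivity)
    _ ≤ (2 * L)⁻¹ + L * (2 * L)⁻¹ ^ 2 := by gcongr
    _ ≤ L⁻¹ := by field_simp; norm_num

lemma inner_add_smul_sub (he : ‖e‖ = 1) (t : ℝ) : ⟪e, x₀ + t • e - x₀⟫_ℝ = t := by
  rw [add_sub_cancel_left, real_inner_smul_right, real_inner_self_eq_norm_sq, he, one_pow, mul_one]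

lemma le_hopfBarrier_add_smul (he : ‖e‖ = 1) (hL : r⁻¹ ≤ L) (t : ℝ) :
    t ≤ hopfBarrier e x₀ r L (x₀ + t • e) := by
  have hnorm : ‖x₀ + t • e - x₀‖ ^ 2 = t ^ 2 := by
    rw [add_sub_cancel_left, norm_smul, he, mul_one, Real.norm_eq_abs, sq_abs]
  rw [hopfBarrier, inner_add_smul_sub he, hnorm]
  have : r⁻¹ * t ^ 2 ≤ L * t ^ 2 := by gcongr
  linarith

lemma add_smul_mem_hopfCap (he : ‖e‖ = 1) (hL : r⁻¹ ≤ L) {t : ℝ} (ht : 0 ≤ t)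
    (htL : t ≤ (2 * L)⁻¹) : x₀ + t • e ∈ hopfCap e x₀ r L :=
  ⟨(inner_add_smul_sub he t).symm ▸ ht, (inner_add_smul_sub he t).symm ▸ htL,
    ht.trans (le_hopfBarrier_add_smul he hL t)⟩

variable [ProperSpace E] {v : E → ℝ}

lemma exists_forall_mem_hopfCap_add_mul_hopfBarrier_le (hr : 0 < r) (hL : 0 < L) (he : ‖e‖ = 1)
    (hv : UpperSemicontinuousOn v (insert x₀ (ball (x₀ + r • e) r)))
    (hlt : ∀ x ∈ ball (x₀ + r • e) r, v x < v x₀)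
    (hmax : ∀ ε > 0, ∀ x ∈ ball (x₀ + r • e) r,
      ¬ IsLocalMax (fun y => v y + ε * hopfBarrier e x₀ r L y) x) :
    ∃ ε > 0, ∀ x ∈ hopfCap e x₀ r L, v x + ε * hopfBarrier e x₀ r L x ≤ v x₀ := by
  have hvcap := hv.mono (hopfCap_subset hr hL he)
  have hball : ∀ x ∈ hopfCap e x₀ r L, x ≠ x₀ → x ∈ ball (x₀ + r • e) r := fun x hx hne =>
    (hopfCap_subset hr hL he hx).resolve_left hne
  obtain ⟨m, hm, hvm⟩ : ∃ m < v x₀, ∀ x ∈ hopfCap e x₀ r L ∩ {x | ⟪e, x - x₀⟫_ℝ = (2 * L)⁻¹},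
      v x ≤ m := by
    refine exists_lt_forall_mem_le_of_isCompact
      ((isCompact_hopfCap hr hL he).inter_right (isClosed_eq (by fun_prop) (by fun_prop)))
      (hvcap.mono inter_subset_left) fun x hx => hlt x (hball x hx.1 ?_)
    rintro rfl
    simpa [hL.ne'] using hx.2
  -- The barrier is at most `L⁻¹` on the cap, so this `ε` keeps the sum below `v x₀` on the top.
  have hε : 0 < L * (v x₀ - m) := mul_pos hL (sub_pos.mpr hm)
  have hbarrier : Continuous fun x => L * (v x₀ - m) * hopfBarrier e x₀ r L x :=
    continuous_const.mul continuous_hopfBarrier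
  refine ⟨L * (v x₀ - m), hε, forall_mem_le_of_not_isLocalMax (isCompact_hopfCap hr hL he)
    (hvcap.add (hbarrier.upperSemicontinuous.upperSemicontinuousOn _)) fun x hx hgt => ?_⟩
  have hne : x ≠ x₀ := by
    rintro rfl
    simp [hopfBarrier_self] at hgt
  have hx_ball := hball x hx hne
  have hs : 0 < ⟪e, x - x₀⟫_ℝ := by
    have := (mem_ball_add_smul_iff hr he).mp hx_ball
    exact pos_of_mul_pos_right ((sq_nonneg _).trans_lt this) (by positivity)
  have hq : 0 < hopfBarrier e x₀ r L x :=
    pos_of_mul_pos_right (by linarith [hlt x hx_ball]) hε.le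
  have hsL : ⟪e, x - x₀⟫_ℝ < (2 * L)⁻¹ := by
    refine hx.2.1.lt_of_ne fun htop => hgt.not_ge ?_
    calc v x + L * (v x₀ - m) * hopfBarrier e x₀ r L x ≤ m + L * (v x₀ - m) * L⁻¹ := by
          gcongr
          · exact hvm x ⟨hx, htop⟩
          · exact hopfBarrier_le_inv hr hL hx
      _ = v x₀ := by field_simp; ring
  exact ⟨mem_interior_hopfCap hs hsL hq, hmax _ hε x hx_ball⟩

lemma exists_eventually_le_slope_of_not_isLocalMax (hr : 0 < r) (hL : r⁻¹ ≤ L) (he : ‖e‖ = 1)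
    (hv : UpperSemicontinuousOn v (insert x₀ (ball (x₀ + r • e) r)))
    (hlt : ∀ x ∈ ball (x₀ + r • e) r, v x < v x₀)
    (hmax : ∀ ε > 0, ∀ x ∈ ball (x₀ + r • e) r,
      ¬ IsLocalMax (fun y => v y + ε * hopfBarrier e x₀ r L y) x) :
    ∃ ε > 0, ∀ᶠ t in 𝓝[>] (0 : ℝ), ε ≤ (v x₀ - v (x₀ + t • e)) / t := by
  have hL_pos : 0 < L := (inv_pos.mpr hr).trans_le hL
  obtain ⟨ε, hε, hle⟩ :=
    exists_forall_mem_hopfCap_add_mul_hopfBarrier_le hr hL_pos he hv hlt hmax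
  refine ⟨ε, hε, ?_⟩
  filter_upwards [Ioc_mem_nhdsGT (show 0 < (2 * L)⁻¹ by positivity)] with t ht
  have hcap := hle _ (add_smul_mem_hopfCap he hL ht.1.le ht.2)
  have hgrowth : ε * t ≤ ε * hopfBarrier e x₀ r L (x₀ + t • e) := by
    gcongr
    exact le_hopfBarrier_add_smul he hL t
  rw [le_div_iff₀ ht.1]
  linarith

end Barrier

section SymmetricMatrix

variable {ι : Type*} [Fintype ι]

lemma dotProduct_self_eq_norm_sq (w : EuclideanSpace ℝ ι) : w.ofLp ⬝ᵥ w.ofLp = ‖w‖ ^ 2 := by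
  rw [← real_inner_self_eq_norm_sq, EuclideanSpace.inner_eq_star_dotProduct, star_trivial]

variable [DecidableEq ι]

lemma mem_spectrum_of_mulVec_eq_smul {K : Type*} [Field K] {A : Matrix ι ι K} {w : ι → K} {l : K}
    (hw : w ≠ 0) (hAw : A *ᵥ w = l • w) : l ∈ spectrum K A := by
  rw [← Matrix.spectrum_toLin']
  refine (Module.End.hasEigenvalue_of_hasEigenvector (x := w) ⟨?_, hw⟩).mem_spectrum
  rwa [Module.End.mem_eigenspace_iff, Matrix.toLin'_apply]

lemma roots_charpoly_neg {𝕜 : Type*} [RCLike 𝕜] {A : Matrix ι ι 𝕜} (hA : A.IsHermitian) :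
    (-A).charpoly.roots = A.charpoly.roots.map Neg.neg := by
  have hcfc := hA.charpoly_cfc_eq Neg.neg
  rw [cfc_neg_id (R := ℝ) A hA.isSelfAdjoint] at hcfc
  rw [hcfc, Polynomial.roots_prod _ _ (Finset.prod_ne_zero_iff.mpr fun i _ =>
    Polynomial.X_sub_C_ne_zero _), hA.roots_charpoly_eq_eigenvalues]
  simp only [Polynomial.roots_X_sub_C, Multiset.bind_singleton, Multiset.map_map]
  exact Multiset.map_congr rfl fun i _ => RCLike.ofReal_neg _

lemma eigenvalues_le_of_forall_dotProduct_mulVec_le {A : Matrix ι ι ℝ} (hA : A.IsHermitian)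
    {μ : ℝ} (hμ : ∀ w, w ⬝ᵥ A *ᵥ w ≤ μ * (w ⬝ᵥ w)) (j : ι) : hA.eigenvalues j ≤ μ := by
  have hquad := hμ (hA.eigenvectorBasis j)
  rw [dotProduct_self_eq_norm_sq, hA.eigenvectorBasis.norm_eq_one, one_pow, mul_one] at hquad
  exact (hA.eigenvalues_eq j).trans_le hquad

end SymmetricMatrix

section WeightedPartialTrace

variable {n : ℕ} {a : Fin n → ℝ} {X : Matrix (Fin n) (Fin n) ℝ}

lemma sortedEig_eq_comp_sort (hX : X.IsHermitian) :
    sortedEig X = hX.eigenvalues ∘ Tuple.sort hX.eigenvalues := by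
  rw [sortedEig, dif_pos hX]
  rfl

lemma sortedEig_monotone (X : Matrix (Fin n) (Fin n) ℝ) : Monotone (sortedEig X) := by
  by_cases hX : X.IsHermitian
  · rw [sortedEig_eq_comp_sort hX]
    exact Tuple.monotone_sort _
  · rw [sortedEig, dif_neg hX]
    exact monotone_const

lemma range_sortedEig (hX : X.IsHermitian) : range (sortedEig X) = spectrum ℝ X := by
  rw [sortedEig_eq_comp_sort hX, EquivLike.range_comp, hX.spectrum_real_eq_range_eigenvalues]

lemma map_sortedEig_univ (hX : X.IsHermitian) :
    Finset.univ.val.map (sortedEig X) = X.charpoly.roots := by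
  rw [hX.roots_charpoly_eq_eigenvalues, Fin.univ_val_map, Fin.univ_val_map,
    sortedEig_eq_comp_sort hX]
  exact Multiset.coe_eq_coe.mpr (Equiv.Perm.ofFn_comp_perm _ _)

lemma eq_sortedEig_of_monotone (hX : X.IsHermitian) {f : Fin n → ℝ} (hf : Monotone f)
    (hroots : Finset.univ.val.map f = X.charpoly.roots) : f = sortedEig X := by
  rw [← map_sortedEig_univ hX, Fin.univ_val_map, Fin.univ_val_map, Multiset.coe_eq_coe] at hroots
  exact List.ofFn_injective
    (hroots.eq_of_sortedLE hf.sortedLE_ofFn (sortedEig_monotone X).sortedLE_ofFn)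

lemma sortedEig_neg (X : Matrix (Fin n) (Fin n) ℝ) (i : Fin n) :
    sortedEig (-X) i = -sortedEig X i.rev := by
  by_cases hX : X.IsHermitian
  · have hmono : Monotone fun i : Fin n => -sortedEig X i.rev := fun i j hij =>
      neg_le_neg (sortedEig_monotone X (Fin.rev_le_rev.mpr hij))
    refine (congrFun (eq_sortedEig_of_monotone hX.neg hmono ?_) i).symm
    rw [roots_charpoly_neg hX, ← map_sortedEig_univ hX, Multiset.map_map]
    nth_rw 2 [← Multiset.map_univ_val_equiv Fin.revPerm]
    rw [Multiset.map_map]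
    rfl
  · have hnegX : ¬ (-X).IsHermitian := by rwa [isHermitian_neg_iff]
    rw [sortedEig, dif_neg hnegX, sortedEig, dif_neg hX]
    simp

lemma Ma_neg (a : Fin n → ℝ) (X : Matrix (Fin n) (Fin n) ℝ) :
    Ma a (-X) = -Ma (a ∘ Fin.rev) X := by
  simp only [Ma, sortedEig_neg, mul_neg, Finset.sum_neg_distrib, Function.comp_apply]
  rw [← Equiv.sum_comp Fin.revPerm]
  simp

lemma sortedEig_zero_le [NeZero n] (hX : X.IsHermitian) {μ : ℝ} (hμ : μ ∈ spectrum ℝ X) :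
    sortedEig X 0 ≤ μ := by
  obtain ⟨j, rfl⟩ := (range_sortedEig hX).symm ▸ hμ
  exact sortedEig_monotone X (Fin.zero_le j)

lemma Ma_le_of_mem_spectrum [NeZero n] (ha : ∀ i, 0 ≤ a i) (hX : X.IsHermitian) {l μ : ℝ}
    (hl : l ∈ spectrum ℝ X) (hμ : ∀ w, w ⬝ᵥ X *ᵥ w ≤ μ * (w ⬝ᵥ w)) :
    Ma a X ≤ a 0 * l + hatA a 0 * μ := by
  have hsplit (f : Fin n → ℝ) : ∑ i, f i = f 0 + ∑ i ∈ Finset.univ.erase 0, f i :=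
    (Finset.add_sum_erase _ _ (Finset.mem_univ 0)).symm
  rw [Ma, hatA, hsplit, hsplit a, add_sub_cancel_left, Finset.sum_mul]
  gcongr with i
  · exact ha 0
  · exact sortedEig_zero_le hX hl
  · exact ha i
  · rw [sortedEig_eq_comp_sort hX]
    exact eigenvalues_le_of_forall_dotProduct_mulVec_le hX hμ _

lemma Ma_smul_one_sub_smul_vecMulVec_le [NeZero n] (ha : ∀ i, 0 ≤ a i) {e : Fin n → ℝ}
    (he : e ⬝ᵥ e = 1) {k l : ℝ} (hl : 0 ≤ l) :
    Ma a (k • (1 : Matrix (Fin n) (Fin n) ℝ) - l • vecMulVec e e) ≤ k * ∑ i, a i - l * a 0 := by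
  have hmulVec (w : Fin n → ℝ) :
      (k • (1 : Matrix (Fin n) (Fin n) ℝ) - l • vecMulVec e e) *ᵥ w =
        k • w - (l * (e ⬝ᵥ w)) • e := by
    simp [sub_mulVec, smul_mulVec, vecMulVec_mulVec, smul_smul]
  have hherm : (k • (1 : Matrix (Fin n) (Fin n) ℝ) - l • vecMulVec e e).IsHermitian := by
    refine IsHermitian.ext fun i j => ?_
    simp [vecMulVec_apply, Matrix.one_apply, eq_comm, mul_comm]
  have heig : k - l ∈ spectrum ℝ (k • (1 : Matrix (Fin n) (Fin n) ℝ) - l • vecMulVec e e) := by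
    refine mem_spectrum_of_mulVec_eq_smul (w := e) ?_ ?_
    · rintro rfl
      simp at he
    · rw [hmulVec, he, mul_one, sub_smul]
  have hquad (w : Fin n → ℝ) :
      w ⬝ᵥ (k • (1 : Matrix (Fin n) (Fin n) ℝ) - l • vecMulVec e e) *ᵥ w ≤ k * (w ⬝ᵥ w) := by
    rw [hmulVec, dotProduct_sub, dotProduct_smul, dotProduct_smul, dotProduct_comm w e,
      smul_eq_mul, smul_eq_mul, mul_assoc]
    exact sub_le_self _ (mul_nonneg hl (mul_self_nonneg _))
  refine (Ma_le_of_mem_spectrum ha hherm heig hquad).trans_eq ?_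
  rw [hatA]
  ring

end WeightedPartialTrace

section Hessian

variable {n : ℕ} {φ : En n → ℝ} {x : En n}

lemma hess_neg (φ : En n → ℝ) (x : En n) : hess (-φ) x = -hess φ x := by
  ext i j
  simp [hess, iteratedFDeriv_neg_apply]

lemma hess_const_smul (hφ : ContDiffAt ℝ 2 φ x) (k : ℝ) : hess (k • φ) x = k • hess φ x := by
  ext i j
  simp [hess, iteratedFDeriv_const_smul_apply hφ]

lemma hess_hopfBarrier (e x₀ : En n) (r L : ℝ) (x : En n) :
    hess (hopfBarrier e x₀ r L) x =
      (2 : ℝ) • (L • vecMulVec e.ofLp e.ofLp - r⁻¹ • (1 : Matrix (Fin n) (Fin n) ℝ)) := by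
  ext i j
  rw [hess, iteratedFDeriv_two_apply]
  simp [fderiv_fderiv_hopfBarrier_apply, EuclideanSpace.inner_single_right, vecMulVec_apply,
    Matrix.one_apply, eq_comm]

lemma Ma_hess_neg_smul_hopfBarrier_neg [NeZero n] {a : Fin n → ℝ} (ha : ∀ i, 0 ≤ a i)
    {e x₀ : En n} (he : ‖e‖ = 1) {r L ε : ℝ} (hL : 0 ≤ L) (haL : r⁻¹ * ∑ i, a i < L * a 0)
    (hε : 0 < ε) (x : En n) : Ma a (hess (-(ε • hopfBarrier e x₀ r L)) x) < 0 := by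
  have hunit : e.ofLp ⬝ᵥ e.ofLp = 1 := by
    rw [dotProduct_self_eq_norm_sq, he, one_pow]
  have hhess : hess (-(ε • hopfBarrier e x₀ r L)) x =
      (2 * ε * r⁻¹) • (1 : Matrix (Fin n) (Fin n) ℝ) -
        (2 * ε * L) • vecMulVec e.ofLp e.ofLp := by
    rw [hess_neg, hess_const_smul contDiff_hopfBarrier.contDiffAt, hess_hopfBarrier]
    module
  calc Ma a (hess (-(ε • hopfBarrier e x₀ r L)) x)
      ≤ 2 * ε * r⁻¹ * ∑ i, a i - 2 * ε * L * a 0 := by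
        rw [hhess]
        exact Ma_smul_one_sub_smul_vecMulVec_le ha hunit (by positivity)
    _ = 2 * ε * (r⁻¹ * ∑ i, a i - L * a 0) := by ring
    _ < 0 := mul_neg_of_pos_of_neg (by positivity) (sub_neg.mpr haL)

end Hessian

section Viscosity

variable {n : ℕ} {a : Fin n → ℝ} {Ω : Set (En n)} {f u : En n → ℝ}

lemma IsViscSupersol.neg (hu : IsViscSupersol a Ω f u) :
    IsViscSubsol (a ∘ Fin.rev) Ω (-f) (-u) := by
  intro x hx φ hφ hmax
  have hmin : IsLocalMinOn (fun y => u y - (-φ) y) Ω x := by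
    convert! hmax.neg using 2 with y
    simp only [Pi.neg_apply]
    ring
  have := hu x hx (-φ) hφ.neg hmin
  rw [hess_neg, Ma_neg] at this
  simpa using neg_le_neg this

lemma ClassAn.comp_rev [NeZero n] (ha : ClassAn a) : ClassA1 (a ∘ Fin.rev) := by
  have hlast : Fin.rev (0 : Fin n) = lastIdx n := Fin.ext (by simp [lastIdx])
  exact ⟨fun i => ha.1 i.rev, by simpa [hlast] using ha.2⟩

variable [NeZero n] {e x₀ : En n} {r : ℝ}

lemma IsViscSubsol.not_isLocalMax_add_hopfBarrier (hu : IsViscSubsol a Ω 0 u)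
    (ha : ∀ i, 0 ≤ a i) (he : ‖e‖ = 1) {L ε : ℝ} (hL : 0 ≤ L)
    (haL : r⁻¹ * ∑ i, a i < L * a 0) (hε : 0 < ε) {x : En n} (hx : x ∈ Ω) :
    ¬ IsLocalMax (fun y => u y + ε * hopfBarrier e x₀ r L y) x := by
  intro hmax
  have hmaxOn : IsLocalMaxOn (fun y => u y - (-(ε • hopfBarrier e x₀ r L)) y) Ω x := by
    simpa using hmax.on Ω
  exact (Ma_hess_neg_smul_hopfBarrier_neg ha he hL haL hε x).not_ge
    (hu x hx _ (contDiff_const.smul contDiff_hopfBarrier).neg hmaxOn)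

lemma IsViscSubsol.exists_eventually_le_slope (hu : IsViscSubsol a (ball (x₀ + r • e) r) 0 u)
    (ha : ClassA1 a) (hr : 0 < r) (he : ‖e‖ = 1)
    (husc : UpperSemicontinuousOn u (insert x₀ (ball (x₀ + r • e) r)))
    (hlt : ∀ x ∈ ball (x₀ + r • e) r, u x < u x₀) :
    ∃ ε > 0, ∀ᶠ t in 𝓝[>] (0 : ℝ), ε ≤ (u x₀ - u (x₀ + t • e)) / t := by
  obtain ⟨L, hL, haL⟩ : ∃ L, r⁻¹ ≤ L ∧ r⁻¹ * ∑ i, a i < L * a 0 := by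
    have hlarge : ∀ᶠ L in atTop, r⁻¹ * ∑ i, a i < L * a 0 :=
      (tendsto_id.atTop_mul_const ha.2).eventually_gt_atTop _
    exact ((eventually_ge_atTop r⁻¹).and hlarge).exists
  have hL_nonneg : 0 ≤ L := (inv_pos.mpr hr).le.trans hL
  exact exists_eventually_le_slope_of_not_isLocalMax hr hL he husc hlt fun _ hε _ hx =>
    hu.not_isLocalMax_add_hopfBarrier ha.1 he hL_nonneg haL hε hx

end Viscosity

theorem hopf_boundary_point_general (n : ℕ) [NeZero n] (a : Fin n → ℝ)
    (c : En n) (r : ℝ) (hr : 0 < r) (x₀ : En n) (hx₀ : dist x₀ c = r)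
    (ν : En n) (hν : ν = r⁻¹ • (x₀ - c)) :
    (ClassA1 a →
      ∀ u : En n → ℝ, UpperSemicontinuousOn u (insert x₀ (ball c r)) →
        IsViscSubsol a (ball c r) (fun _ => 0) u →
        (∀ x ∈ ball c r, u x < u x₀) →
        ∃ ε > 0, ∀ᶠ t in 𝓝[>] (0 : ℝ), ε ≤ (u x₀ - u (x₀ - t • ν)) / t) ∧
    (ClassAn a →
      ∀ u : En n → ℝ, LowerSemicontinuousOn u (insert x₀ (ball c r)) →
        IsViscSupersol a (ball c r) (fun _ => 0) u →
        (∀ x ∈ ball c r, u x₀ < u x) →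
        ∃ ε > 0, ∀ᶠ t in 𝓝[>] (0 : ℝ), (u x₀ - u (x₀ - t • ν)) / t ≤ -ε) := by
  have he : ‖-ν‖ = 1 := by
    rw [hν, norm_neg, norm_smul, ← dist_eq_norm, hx₀, Real.norm_of_nonneg (inv_nonneg.mpr hr.le),
      inv_mul_cancel₀ hr.ne']
  obtain rfl : c = x₀ + r • -ν := by
    rw [hν, smul_neg, smul_inv_smul₀ hr.ne']
    abel
  refine ⟨fun ha u husc hu hlt => ?_, fun ha u hlsc hu hlt => ?_⟩
  · simpa [sub_eq_add_neg] using IsViscSubsol.exists_eventually_le_slope hu ha hr he husc hlt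
  · have husc := continuous_neg.comp_lowerSemicontinuousOn_antitone hlsc fun _ _ => neg_le_neg
    have hsubsol := IsViscSupersol.neg (f := 0) hu
    rw [neg_zero] at hsubsol
    obtain ⟨ε, hε, hslope⟩ := hsubsol.exists_eventually_le_slope ha.comp_rev hr he husc
      fun x hx => neg_lt_neg (hlt x hx)
    refine ⟨ε, hε, hslope.mono fun t ht => le_neg.mpr (ht.trans_eq ?_)⟩
    rw [smul_neg, ← sub_eq_add_neg, Pi.neg_apply, Pi.neg_apply]
    ring

/-- **Hopf boundary point lemma (Lemma 6.1).** Let `B = ball c r` and `x₀ ∈ ∂B`, with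
`ν = (x₀ - c)/r` the outer unit normal at `x₀`. (i) If `M_a ∈ 𝒜₁`, `u` is usc on `B̄`, a
viscosity subsolution of `M_a(D²u) = 0` in `B` with `u(x₀) > u(x)` for all `x ∈ B`, and
the outer normal derivative `D = lim_{t→0⁺} (u(x₀) − u(x₀ − tν))/t` exists, then `D > 0`.
(ii) Dually, for `M_a ∈ 𝒜ₙ` and a supersolution with a strict minimum at `x₀`, `D < 0`. -/
theorem hopf_boundary_point (n : ℕ) [NeZero n] (a : Fin n → ℝ)
    (c : En n) (r : ℝ) (hr : 0 < r) (x₀ : En n) (hx₀ : dist x₀ c = r)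
    (ν : En n) (hν : ν = r⁻¹ • (x₀ - c)) :
    (ClassA1 a →
      ∀ u : En n → ℝ, UpperSemicontinuousOn u (closedBall c r) →
        IsViscSubsol a (ball c r) (fun _ => 0) u →
        (∀ x ∈ ball c r, u x < u x₀) →
        ∀ D : ℝ,
          Filter.Tendsto (fun t => (u x₀ - u (x₀ - t • ν)) / t)
            (nhdsWithin 0 (Set.Ioi (0 : ℝ))) (nhds D) →
          0 < D) ∧
    (ClassAn a →
      ∀ u : En n → ℝ, LowerSemicontinuousOn u (closedBall c r) →
        IsViscSupersol a (ball c r) (fun _ => 0) u →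
        (∀ x ∈ ball c r, u x₀ < u x) →
        ∀ D : ℝ,
          Filter.Tendsto (fun t => (u x₀ - u (x₀ - t • ν)) / t)
            (nhdsWithin 0 (Set.Ioi (0 : ℝ))) (nhds D) →
          D < 0) := by
  have hsub : insert x₀ (ball c r) ⊆ closedBall c r :=
    insert_subset (mem_closedBall.mpr hx₀.le) ball_subset_closedBall
  obtain ⟨hsubsol, hsupersol⟩ := hopf_boundary_point_general n a c r hr x₀ hx₀ ν hν
  refine ⟨fun ha u husc hu hlt D hD => ?_, fun ha u hlsc hu hlt D hD => ?_⟩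
  · obtain ⟨ε, hε, hslope⟩ := hsubsol ha u (husc.mono hsub) hu hlt
    exact hε.trans_le (ge_of_tendsto hD hslope)
  · obtain ⟨ε, hε, hslope⟩ := hsupersol ha u (hlsc.mono hsub) hu hlt
    exact (le_of_tendsto hD hslope).trans_lt (neg_lt_zero.mpr hε)
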